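/- Let α and β be complex numbers with Re(α − 2β) > −2, β ≠ 1, and such that 1+α and 2+α−β are not nonpositive integers and none of the digamma values below is taken at a pole. Then ₃F₂(1, α, β; 1+α, 2+α−β; 1) = [α(1+α−β)/(β−1)]·[ψ(α) − ψ(2+α−2β) − ψ((α+1)/2) + ψ((α+3)/2 − β)]. -/

import Mathlib

/-- The ascending Pochhammer symbol `(x)_n`. -/
noncomputable def poch (x : ℂ) (n : ℕ) : ℂ := (ascPochhammer ℂ n).eval x

/-- The generalized hypergeometric series `₃F₂(a₁,a₂,a₃; b₁,b₂; 1)`. -/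
noncomputable def F32 (a1 a2 a3 b1 b2 : ℂ) : ℂ :=
  ∑' n : ℕ, poch a1 n * poch a2 n * poch a3 n / ((n.factorial : ℂ) * poch b1 n * poch b2 n)

/-- `z` is not a nonpositive integer (i.e. not a pole of `Γ` or `ψ`). -/
def NotPole (z : ℂ) : Prop := ∀ n : ℕ, z ≠ -(n : ℂ)

/-- The digamma function `ψ(z) = Γ'(z)/Γ(z)`. -/
noncomputable def digamma (z : ℂ) : ℂ := deriv Complex.Gamma z / Complex.Gamma z

theorem aux_log_bound (n : ℕ) :
    |(Real.log (n + 2) - Real.log (n + 1)) - 1 / ((n : ℝ) + 1)| ≤ 1 / ((n : ℝ) + 1) ^ 2 := by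
  have h1 : (0 : ℝ) < n + 1 := by positivity
  have h2 : (0 : ℝ) < n + 2 := by positivity
  rw [← Real.log_div h2.ne' h1.ne']
  have hu := Real.log_le_sub_one_of_pos (div_pos h2 h1)
  have hl := Real.one_sub_inv_le_log_of_pos (div_pos h2 h1)
  have e1 : ((n : ℝ) + 2) / (n + 1) - 1 = 1 / (n + 1) := by field_simp; ring
  have e2 : 1 - (((n : ℝ) + 2) / (n + 1))⁻¹ = 1 / (n + 2) := by field_simp; ring
  have e3 : 1 / ((n : ℝ) + 1) - 1 / (n + 2) ≤ 1 / ((n : ℝ) + 1) ^ 2 := by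
    have : 1 / ((n : ℝ) + 1) - 1 / (n + 2) = 1 / ((n + 1) * (n + 2)) := by field_simp; ring
    rw [this]
    apply one_div_le_one_div_of_le (by positivity)
    nlinarith
  rw [e1] at hu
  rw [e2] at hl
  have e4 : (0 : ℝ) ≤ 1 / ((n : ℝ) + 1) ^ 2 := by positivity
  rw [abs_le]
  constructor <;> linarith

theorem aux_summable_sq (C : ℝ) : Summable fun n : ℕ => C * (1 / ((n : ℝ) + 1) ^ 2) := by
  apply Summable.mul_left
  have := (summable_nat_add_iff 1).2 (Real.summable_one_div_nat_pow.2 (by norm_num : 1 < 2))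
  simpa using this

noncomputable def gTerm (n : ℕ) (z : ℂ) : ℂ :=
  z * ((Real.log (n + 2) - Real.log (n + 1) : ℝ) : ℂ) - Complex.log (1 + z / (n + 1))

noncomputable def gTerm' (n : ℕ) (z : ℂ) : ℂ :=
  ((Real.log (n + 2) - Real.log (n + 1) : ℝ) : ℂ) - 1 / (n + 1 + z)

theorem aux_re_ne (n : ℕ) (z : ℂ) (hz : 0 < z.re) : (n : ℂ) + 1 + z ≠ 0 := by
  intro h
  have := congrArg Complex.re h
  simp at this
  have : (0 : ℝ) ≤ n := by positivity
  linarith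

theorem aux_cast_ne (n : ℕ) : (n : ℂ) + 1 ≠ 0 := by exact_mod_cast Nat.succ_ne_zero n

theorem gTerm_hasDerivAt (n : ℕ) (z : ℂ) (hz : 0 < z.re) :
    HasDerivAt (gTerm n) (gTerm' n z) z := by
  have h0 := aux_cast_ne n
  have h1 := aux_re_ne n z hz
  have hs : 1 + z / (n + 1) ∈ Complex.slitPlane := by
    left
    have : z / ((n : ℂ) + 1) = ((1 / ((n : ℝ) + 1) : ℝ) : ℂ) * z := by push_cast; field_simp
    rw [this, Complex.add_re, Complex.re_ofReal_mul]
    simp only [Complex.one_re]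
    positivity
  have hd : HasDerivAt (fun w : ℂ => 1 + w / ((n : ℂ) + 1)) (1 / ((n : ℂ) + 1)) z :=
    ((hasDerivAt_id z).div_const _).const_add 1
  have := ((hasDerivAt_id z).mul_const
    ((Real.log (n + 2) - Real.log (n + 1) : ℝ) : ℂ)).sub (hd.clog hs)
  convert! this using 1
  unfold gTerm'
  have h2 : 1 + z / ((n : ℂ) + 1) = (n + 1 + z) / (n + 1) := by field_simp
  rw [h2, one_mul]
  field_simp

theorem gTerm'_bound (n : ℕ) (z : ℂ) (hz : 0 < z.re) :
    ‖gTerm' n z‖ ≤ (1 + ‖z‖) * (1 / ((n : ℝ) + 1) ^ 2) := by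
  have h0 := aux_cast_ne n
  have h1 := aux_re_ne n z hz
  have e : gTerm' n z = (((Real.log (n + 2) - Real.log (n + 1)) - 1 / ((n : ℝ) + 1) : ℝ) : ℂ)
      + z / ((n + 1) * (n + 1 + z)) := by
    unfold gTerm'; push_cast; field_simp; ring
  have hn : (n : ℝ) + 1 ≤ ‖(n : ℂ) + 1 + z‖ := by
    refine le_trans ?_ (Complex.re_le_norm _)
    simp; linarith
  have hn' : ‖(n : ℂ) + 1‖ = (n : ℝ) + 1 := by
    have : (n : ℂ) + 1 = ((n + 1 : ℝ) : ℂ) := by push_cast; rfl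
    rw [this, Complex.norm_real, Real.norm_of_nonneg (by positivity)]
  rw [e]
  refine (norm_add_le _ _).trans ?_
  rw [Complex.norm_real, Real.norm_eq_abs, add_mul 1 ‖z‖, one_mul]
  refine add_le_add (aux_log_bound n) ?_
  rw [norm_div, norm_mul, hn', div_eq_mul_one_div]
  apply mul_le_mul_of_nonneg_left _ (norm_nonneg _)
  apply one_div_le_one_div_of_le (by positivity)
  rw [sq]
  apply mul_le_mul_of_nonneg_left hn (by positivity)

theorem gTerm_one (n : ℕ) : gTerm n 1 = 0 := by
  unfold gTerm
  have h1 : (0 : ℝ) < n + 1 := by positivity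
  have h2 : (0 : ℝ) < n + 2 := by positivity
  have : (1 : ℂ) + 1 / (n + 1) = (((n + 2) / (n + 1) : ℝ) : ℂ) := by
    have := aux_cast_ne n
    push_cast; field_simp; ring
  rw [this, ← Complex.ofReal_log (by positivity), Real.log_div h2.ne' h1.ne', one_mul, sub_self]

theorem gTerm_partial (z : ℂ) (hz : 0 < z.re) (N : ℕ) :
    Complex.exp (∑ k ∈ Finset.range N, gTerm k z) =
      Complex.exp (z * (Real.log (N + 1) : ℝ)) * N.factorial /
        ∏ j ∈ Finset.range N, (z + 1 + j) := by
  induction N with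
  | zero => simp
  | succ N ih =>
    rw [Finset.sum_range_succ, Complex.exp_add, ih, Finset.prod_range_succ]
    have h0 := aux_cast_ne N
    have h1 := aux_re_ne N z hz
    have h2 : 1 + z / ((N : ℂ) + 1) = (N + 1 + z) / (N + 1) := by field_simp
    have h3 : 1 + z / ((N : ℂ) + 1) ≠ 0 := by rw [h2]; exact div_ne_zero h1 h0
    have hp : ∏ j ∈ Finset.range N, (z + 1 + j) ≠ 0 := by
      rw [Finset.prod_ne_zero_iff]
      intro j _
      have := aux_re_ne j z hz
      intro h; apply this; rw [← h]; ring
    unfold gTerm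
    rw [Complex.exp_sub, Complex.exp_log h3, h2, Nat.factorial_succ]
    have h4 : z + 1 + (N : ℂ) ≠ 0 := by intro h; apply h1; rw [← h]; ring
    have e : Complex.exp (z * (Real.log ((N + 1 : ℕ) + 1) : ℝ)) =
        Complex.exp (z * (Real.log (N + 1) : ℝ)) *
        Complex.exp (z * ((Real.log (N + 2) - Real.log (N + 1) : ℝ) : ℂ)) := by
      rw [← Complex.exp_add]
      congr 1
      push_cast
      rw [show (N : ℝ) + 1 + 1 = N + 2 by ring]
      ring
    rw [e]
    push_cast
    field_simp
    ring

open Filter Topology in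
theorem gTerm_limit (z : ℂ) (hz : 0 < z.re) (hs : Summable fun n => gTerm n z) :
    Complex.Gamma (z + 1) = Complex.exp (∑' n, gTerm n z) := by
  have h1 : Tendsto (fun N : ℕ => Complex.exp (∑ k ∈ Finset.range (N + 1), gTerm k z)) atTop
      (𝓝 (Complex.exp (∑' n, gTerm n z))) :=
    (Complex.continuous_exp.tendsto _).comp
      ((tendsto_add_atTop_iff_nat 1).2 hs.hasSum.tendsto_sum_nat)
  have hl : Tendsto (fun N : ℕ => Real.log ((N + 2 : ℝ)) - Real.log N) atTop (𝓝 0) := by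
    have a := Real.tendsto_log_nat_add_one_sub_log
    have b := (tendsto_add_atTop_iff_nat 1).2 a
    have := b.add a
    simp only [add_zero] at this
    refine this.congr fun N => ?_
    push_cast
    rw [show (N : ℝ) + 1 + 1 = N + 2 by ring]
    ring
  have he : Tendsto (fun N : ℕ => Complex.exp (z * ((Real.log ((N + 2 : ℝ)) - Real.log N : ℝ) : ℂ)))
      atTop (𝓝 1) := by
    have := (Complex.continuous_exp.tendsto _).comp
      (((Complex.continuous_ofReal.tendsto _).comp hl).const_mul z)
    simpa [Function.comp_def] using this
  have hr : Tendsto (fun N : ℕ => 1 + 1 / (N : ℂ)) atTop (𝓝 1) := by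
    have := (tendsto_one_div_atTop_nhds_zero_nat (𝕜 := ℂ)).const_add 1
    simpa using this
  have h2 := ((Complex.GammaSeq_tendsto_Gamma (z + 1)).mul he).mul hr
  simp only [mul_one] at h2
  refine tendsto_nhds_unique h2 (h1.congr' ?_)
  filter_upwards [eventually_gt_atTop 0] with N hN
  have hN0 : (N : ℂ) ≠ 0 := by exact_mod_cast hN.ne'
  rw [gTerm_partial z hz, Complex.GammaSeq, Complex.cpow_def_of_ne_zero hN0, Nat.factorial_succ]
  have e : Complex.exp (z * (Real.log ((N + 1 : ℕ) + 1) : ℝ)) * N =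
      Complex.exp ((Real.log N : ℝ) * (z + 1)) *
      Complex.exp (z * ((Real.log (N + 2) - Real.log N : ℝ) : ℂ)) := by
    have hh : (N : ℂ) = Complex.exp ((Real.log N : ℝ) : ℂ) := by
      rw [Complex.natCast_log, Complex.exp_log hN0]
    conv_lhs => rw [hh]
    rw [← Complex.exp_add, ← Complex.exp_add]
    congr 1
    push_cast
    rw [show (N : ℝ) + 1 + 1 = N + 2 by ring]
    ring
  push_cast at e ⊢
  have e2 : Complex.exp (Complex.log N * (z + 1)) *
      Complex.exp (z * ((Real.log (N + 2) : ℂ) - Complex.log N)) / N =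
      Complex.exp (z * (Real.log ((N : ℝ) + 1 + 1) : ℂ)) := by
    rw [← e]; field_simp
  rw [← e2]
  field_simp

theorem digamma_hasSum (z : ℂ) (hz : 0 < z.re) :
    HasSum (fun n => gTerm' n z) (digamma (z + 1)) := by
  set t : Set ℂ := {w | 0 < w.re} ∩ Metric.ball 0 (‖z‖ + 2) with ht
  have hto : IsOpen t := (isOpen_lt continuous_const Complex.continuous_re).inter Metric.isOpen_ball
  have hc : IsPreconnected t :=
    ((convex_halfSpace_re_gt 0).inter (convex_ball 0 _)).isPreconnected
  have hzt : z ∈ t := ⟨hz, by simp⟩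
  have h1t : (1 : ℂ) ∈ t := ⟨by simp, by simp; linarith [norm_nonneg z]⟩
  have hb : ∀ n y, y ∈ t → ‖gTerm' n y‖ ≤ (1 + (‖z‖ + 2)) * (1 / ((n : ℝ) + 1) ^ 2) := by
    intro n y hy
    refine (gTerm'_bound n y hy.1).trans ?_
    have : ‖y‖ ≤ ‖z‖ + 2 := by simpa using (Metric.mem_ball.1 hy.2).le
    gcongr
  have hu := aux_summable_sq (1 + (‖z‖ + 2))
  have hs0 : Summable fun n => gTerm n 1 := by simp [gTerm_one, summable_zero]
  have hs : ∀ y ∈ t, Summable fun n => gTerm n y := fun y hy =>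
    summable_of_summable_hasDerivAt_of_isPreconnected hu hto hc
      (fun n y hy => gTerm_hasDerivAt n y hy.1) hb h1t hs0 hy
  have hd := hasDerivAt_tsum_of_isPreconnected hu hto hc
      (fun n y hy => gTerm_hasDerivAt n y hy.1) hb h1t hs0 hzt
  have hd2 := hd.cexp
  have heq : (fun w => Complex.Gamma (w + 1)) =ᶠ[nhds z]
      fun w => Complex.exp (∑' n, gTerm n w) := by
    filter_upwards [hto.mem_nhds hzt] with w hw
    exact gTerm_limit w hw.1 (hs w hw)
  have hd3 := heq.symm.hasDerivAt_iff.1 hd2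
  have hd4 : deriv Complex.Gamma (z + 1) =
      Complex.exp (∑' n, gTerm n z) * ∑' n, gTerm' n z := by
    rw [← deriv_comp_add_const, hd3.deriv]
  have hsum : Summable fun n => gTerm' n z := .of_norm_bounded hu fun n => hb n z hzt
  have : digamma (z + 1) = ∑' n, gTerm' n z := by
    unfold digamma
    rw [hd4, gTerm_limit z hz (hs z hzt), mul_div_cancel_left₀ _ (Complex.exp_ne_zero _)]
  rw [this]
  exact hsum.hasSum

theorem digamma_add_one (z : ℂ) (hz : NotPole z) : digamma (z + 1) = digamma z + 1 / z := by
  have := Complex.digamma_apply_add_one z hz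
  simpa [Complex.digamma_def, logDeriv_apply, digamma] using this

theorem NotPole.add_nat {z : ℂ} (hz : NotPole z) (k : ℕ) : NotPole (z + k) := by
  intro n h
  apply hz (n + k)
  push_cast
  linear_combination h

theorem NotPole.ne {z : ℂ} (hz : NotPole z) (k : ℕ) : z + k ≠ 0 := by
  intro h
  exact hz k (by linear_combination h)

theorem digamma_add_nat (z : ℂ) (hz : NotPole z) (N : ℕ) :
    digamma (z + N) = digamma z + ∑ k ∈ Finset.range N, 1 / (z + k) := by
  induction N with
  | zero => simp
  | succ N ih =>
    rw [Finset.sum_range_succ, ← add_assoc, ← ih, ← digamma_add_one _ (hz.add_nat N)]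
    push_cast; congr 1; ring

open Filter Topology in
theorem digamma_diff_aux (z w : ℂ) (hz : 0 < z.re) (hw : 0 < w.re) :
    Tendsto (fun N : ℕ => ∑ k ∈ Finset.range N, (1 / (w + 1 + k) - 1 / (z + 1 + k))) atTop
      (𝓝 (digamma (z + 1) - digamma (w + 1))) := by
  have := ((digamma_hasSum z hz).sub (digamma_hasSum w hw)).tendsto_sum_nat
  refine this.congr fun N => Finset.sum_congr rfl fun k _ => ?_
  unfold gTerm'
  rw [show (k : ℂ) + 1 + z = z + 1 + k by ring, show (k : ℂ) + 1 + w = w + 1 + k by ring]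
  ring

open Filter Topology in
theorem digamma_diff (z w : ℂ) (hz : NotPole z) (hw : NotPole w) :
    Tendsto (fun N : ℕ => ∑ k ∈ Finset.range N, (1 / (w + k) - 1 / (z + k))) atTop
      (𝓝 (digamma z - digamma w)) := by
  obtain ⟨M, hM⟩ := exists_nat_gt (max (-z.re) (-w.re))
  have hM1 : -z.re < M := lt_of_le_of_lt (le_max_left _ _) hM
  have hM2 : -w.re < M := lt_of_le_of_lt (le_max_right _ _) hM
  have h := digamma_diff_aux (z + M) (w + M) (by simp; linarith) (by simp; linarith)
  rw [← tendsto_add_atTop_iff_nat (M + 1)]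
  have e1 := digamma_add_nat z hz (M + 1)
  have e2 := digamma_add_nat w hw (M + 1)
  have h2 := h.add_const (∑ k ∈ Finset.range (M + 1), (1 / (w + k) - 1 / (z + k)))
  have e3 : digamma (z + M + 1) - digamma (w + M + 1) +
      (∑ k ∈ Finset.range (M + 1), (1 / (w + k) - 1 / (z + k))) = digamma z - digamma w := by
    push_cast at e1 e2
    rw [add_assoc z, add_assoc w, e1, e2, Finset.sum_sub_distrib]; ring
  rw [e3] at h2
  refine h2.congr fun N => ?_
  rw [add_comm N, Finset.sum_range_add _ (M + 1) N, add_comm, add_right_inj]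
  refine Finset.sum_congr rfl fun k _ => ?_
  push_cast
  ring_nf

theorem poch_zero (x : ℂ) : poch x 0 = 1 := by simp [poch]

theorem poch_succ (x : ℂ) (n : ℕ) : poch x (n + 1) = poch x n * (x + n) := by
  simp [poch, ascPochhammer_succ_eval]

theorem poch_prod (x : ℂ) (n : ℕ) : poch x n = ∏ j ∈ Finset.range n, (x + j) := by
  induction n with
  | zero => simp [poch_zero]
  | succ n ih => rw [poch_succ, ih, Finset.prod_range_succ]

theorem poch_left (x : ℂ) (n : ℕ) : poch x (n + 1) = x * poch (x + 1) n := by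
  induction n with
  | zero => simp [poch_succ, poch_zero]
  | succ n ih => rw [poch_succ, ih, poch_succ (x + 1)]; push_cast; ring

theorem poch_ne_zero {x : ℂ} (hx : NotPole x) (n : ℕ) : poch x n ≠ 0 := by
  rw [poch_prod, Finset.prod_ne_zero_iff]
  exact fun j _ => hx.ne j

theorem poch_one (n : ℕ) : poch 1 n = n.factorial := by
  simp [poch]

open Filter Topology Asymptotics in
theorem gammaSeq_inv_isBigO (b : ℂ) :
    (fun n : ℕ => (Complex.GammaSeq b n)⁻¹) =O[atTop] (fun _ => (1 : ℝ)) := by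
  by_cases hb : NotPole b
  · exact ((Complex.GammaSeq_tendsto_Gamma b).inv₀ (Complex.Gamma_ne_zero hb)).isBigO_one ℝ
  · unfold NotPole at hb
    push Not at hb
    obtain ⟨m, hm⟩ := hb
    have : (fun n : ℕ => (Complex.GammaSeq b n)⁻¹) =ᶠ[atTop] fun _ => 0 := by
      filter_upwards [eventually_ge_atTop m] with n hn
      have : ∏ j ∈ Finset.range (n + 1), (b + j) = 0 :=
        Finset.prod_eq_zero (Finset.mem_range.2 (Nat.lt_succ_of_le hn)) (by rw [hm]; ring)
      simp [Complex.GammaSeq, this]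
    exact this.trans_isBigO (isBigO_zero _ _)

open Filter Topology Asymptotics in
theorem ratio_isBigO (b c : ℂ) :
    (fun n : ℕ => poch b (n + 1) / poch c (n + 1)) =O[atTop]
      (fun n : ℕ => (n : ℝ) ^ (b - c).re) := by
  have h1 := (Complex.GammaSeq_tendsto_Gamma c).isBigO_one ℝ
  have h2 := gammaSeq_inv_isBigO b
  have h3 : (fun n : ℕ => (n : ℂ) ^ (b - c)) =O[atTop] (fun n : ℕ => (n : ℝ) ^ (b - c).re) := by
    apply IsBigO.of_bound 1
    filter_upwards [eventually_gt_atTop 0] with n hn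
    rw [Complex.norm_natCast_cpow_of_pos hn, one_mul]
    exact le_abs_self _
  have h4 := (h3.mul h1).mul h2
  simp only [mul_one] at h4
  refine h4.congr' ?_ EventuallyEq.rfl
  filter_upwards [eventually_gt_atTop 0] with n hn
  have hn0 : (n : ℂ) ≠ 0 := by exact_mod_cast hn.ne'
  have hf : (n.factorial : ℂ) ≠ 0 := by exact_mod_cast n.factorial_ne_zero
  rw [Complex.GammaSeq, Complex.GammaSeq, ← poch_prod, ← poch_prod, Complex.cpow_sub _ _ hn0]
  have hc : (n : ℂ) ^ c ≠ 0 := by simp [Complex.cpow_eq_zero_iff, hn0]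
  have hb : (n : ℂ) ^ b ≠ 0 := by simp [Complex.cpow_eq_zero_iff, hn0]
  rw [inv_div]
  field_simp

open Filter Topology in
theorem lin_ratio_tendsto (c a : ℂ) :
    Tendsto (fun n : ℕ => (c + n) / (a + n)) atTop (𝓝 1) := by
  have h : ∀ x : ℂ, Tendsto (fun n : ℕ => x / n + 1) atTop (𝓝 1) := fun x => by
    simpa using (tendsto_const_div_atTop_nhds_zero_nat x).add_const 1
  have := (h c).div (h a) one_ne_zero
  rw [div_one] at this
  refine this.congr' ?_
  filter_upwards [eventually_gt_atTop 0] with n hn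
  have hn0 : (n : ℂ) ≠ 0 := by exact_mod_cast hn.ne'
  have e : ∀ x : ℂ, x / n + 1 = (x + n) / n := fun x => by field_simp
  rw [Pi.div_apply, e, e, div_div_div_cancel_right₀ hn0]

open Filter Topology in
theorem inv_lin_tendsto (a : ℂ) :
    Tendsto (fun n : ℕ => 1 / (a + n)) atTop (𝓝 0) := by
  have h1 := (lin_ratio_tendsto 0 a).mul (tendsto_one_div_atTop_nhds_zero_nat (𝕜 := ℂ))
  rw [mul_zero] at h1
  refine h1.congr' ?_
  filter_upwards [eventually_gt_atTop 0] with n hn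
  have hn0 : (n : ℂ) ≠ 0 := by exact_mod_cast hn.ne'
  field_simp
  simp

noncomputable def Tsum (α b : ℂ) : ℂ := ∑' n : ℕ, poch b (n + 1) / ((α + n) * poch (α - b) (n + 1))

noncomputable def Ssum (α b : ℂ) : ℂ := ∑' n : ℕ, poch b (n + 1) / ((α + n) * poch (α - b + 1) n)

noncomputable def Gcert (α b : ℂ) (n : ℕ) : ℂ :=
  poch b (n + 1) / poch (α - b + 1) n * (1 / (α - 2 * b) + 1 / (α + n))

open Filter Topology Asymptotics in
theorem step (α b : ℂ) (h : 0 < (α - 2 * b).re) (ha : NotPole α) (hc : NotPole (α - b + 1)) :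
    Ssum α b = (α - b) * (1 / (α - 2 * b) - 1 / α - Tsum (α + 1) b) := by
  set c := α - b + 1 with hcdef
  have hd0 : α - 2 * b ≠ 0 := by intro h0; rw [h0] at h; simp at h
  have ha0 : α ≠ 0 := by simpa using ha 0
  have hu := ratio_isBigO b c
  have hre : (b - c).re = -1 - (α - 2 * b).re := by
    rw [hcdef]; simp; ring
  have hsu : Summable fun n : ℕ => (n : ℝ) ^ (b - c).re :=
    Real.summable_nat_rpow.2 (by rw [hre]; linarith)
  have hpc := poch_ne_zero hc
  have hcn := hc.ne
  have han := ha.ne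
  have han1 : ∀ n : ℕ, α + 1 + n ≠ 0 := fun n => by
    have := ha.ne (n + 1); push_cast at this; intro h; apply this; rw [← h]; ring
  -- first series
  have e1 : ∀ n : ℕ, poch b (n + 1) / ((α + n) * poch c n) =
      poch b (n + 1) / poch c (n + 1) * ((c + n) / (α + n)) := fun n => by
    have := hpc n; have := hcn n; have := han n
    rw [poch_succ c]; field_simp
  have s1 : Summable fun n : ℕ => poch b (n + 1) / ((α + n) * poch c n) := by
    have := hu.mul ((lin_ratio_tendsto c α).isBigO_one ℝ)
    simp only [mul_one] at this
    simp_rw [e1]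
    exact summable_of_isBigO_nat hsu this
  have e2 : α + 1 - b = c := by rw [hcdef]; ring
  have s2 : Summable fun n : ℕ => poch b (n + 1) / ((α + 1 + n) * poch c (n + 1)) := by
    have := hu.mul ((inv_lin_tendsto (α + 1)).isBigO_one ℝ)
    simp only [mul_one] at this
    refine summable_of_isBigO_nat hsu (this.congr_left fun n => ?_)
    have := hpc (n + 1); have := han1 n
    field_simp
  have hG : Tendsto (Gcert α b) atTop (𝓝 0) := by
    have t1 : Tendsto (fun n : ℕ => (n : ℝ) ^ (b - c).re * n) atTop (𝓝 0) := by
      have := (tendsto_rpow_neg_atTop h).comp (tendsto_natCast_atTop_atTop (R := ℝ))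
      refine this.congr' ?_
      filter_upwards [eventually_gt_atTop 0] with n hn
      have hn0 : (n : ℝ) ≠ 0 := by exact_mod_cast hn.ne'
      simp only [Function.comp]
      rw [← Real.rpow_add_one hn0, hre]; congr 1; ring
    have o1 : (fun n : ℕ => c + (n : ℂ)) =O[atTop] (fun n : ℕ => (n : ℝ)) := by
      have o2 : (fun n : ℕ => (n : ℂ)) =O[atTop] (fun n : ℕ => (n : ℝ)) :=
        IsBigO.of_bound 1 (Eventually.of_forall fun n => by simp)
      have o3 := ((lin_ratio_tendsto c 0).isBigO_one ℝ).mul o2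
      simp only [one_mul] at o3
      refine o3.congr' ?_ EventuallyEq.rfl
      filter_upwards [eventually_gt_atTop 0] with n hn
      have hn0 : (n : ℂ) ≠ 0 := by exact_mod_cast hn.ne'
      rw [zero_add, div_mul_cancel₀ _ hn0]
    have t2 : Tendsto (fun n : ℕ => poch b (n + 1) / poch c (n + 1) * (c + n)) atTop (𝓝 0) :=
      (hu.mul o1).trans_tendsto t1
    have t3 := t2.mul ((inv_lin_tendsto α).const_add (1 / (α - 2 * b)))
    rw [zero_mul] at t3
    refine t3.congr fun n => ?_
    have := hpc n; have := hcn n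
    unfold Gcert
    rw [poch_succ c, ← hcdef]
    congr 1
    field_simp
  have key : ∀ n : ℕ, Gcert α b n - Gcert α b (n + 1) =
      poch b (n + 1) / ((α + n) * poch c n) +
        (α - b) * (poch b (n + 1) / ((α + 1 + n) * poch c (n + 1))) := fun n => by
    have h1 := hpc n; have h2 := hcn n; have h3 := han n; have h4 := han1 n
    unfold Gcert
    rw [← hcdef, poch_succ b (n + 1), poch_succ c]
    have h5 : α + ((n + 1 : ℕ) : ℂ) = α + 1 + n := by push_cast; ring
    rw [h5]
    push_cast
    generalize poch b (n + 1) = P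
    generalize poch c n = Q at *
    rw [hcdef] at h2 ⊢
    field_simp
    ring
  have hs := s1.hasSum.add (s2.hasSum.mul_left (α - b))
  have ht := hs.tendsto_sum_nat
  have ht2 : Tendsto (fun N => ∑ n ∈ Finset.range N, (poch b (n + 1) / ((α + n) * poch c n) +
        (α - b) * (poch b (n + 1) / ((α + 1 + n) * poch c (n + 1))))) atTop
        (𝓝 (Gcert α b 0 - 0)) := by
    refine (hG.const_sub (Gcert α b 0)).congr fun N => ?_
    simp_rw [← key]
    rw [Finset.sum_range_sub']
  have hfin := tendsto_nhds_unique ht ht2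
  have hT : Tsum (α + 1) b = ∑' n : ℕ, poch b (n + 1) / ((α + 1 + n) * poch c (n + 1)) := by
    unfold Tsum; rw [e2]
  unfold Ssum
  rw [hT, mul_sub, ← hcdef, eq_sub_iff_add_eq, hfin]
  unfold Gcert
  simp only [poch_succ, poch_zero, Nat.cast_zero, add_zero, one_mul, sub_zero, zero_add, div_one]
  have hx : (α - 2 * b) * (1 / (α - 2 * b)) = 1 := mul_one_div_cancel hd0
  have hy : α * (1 / α) = 1 := mul_one_div_cancel ha0
  linear_combination hy - hx

theorem T_step (α b : ℂ) (h : 0 < (α - 2 * b).re) (ha : NotPole α) (hc : NotPole (α - b)) :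
    Ssum α b = (α - b) * Tsum α b ∧
    Tsum α b = 1 / (α - 2 * b) - 1 / α - Tsum (α + 1) b := by
  have h0 : α - b ≠ 0 := by simpa using hc 0
  have h1 : Ssum α b = (α - b) * Tsum α b := by
    unfold Ssum Tsum
    rw [← tsum_mul_left]
    refine tsum_congr fun n => ?_
    rw [poch_left (α - b)]
    have := ha.ne n
    have := poch_ne_zero (by simpa using hc.add_nat 1) n
    field_simp
  refine ⟨h1, ?_⟩
  have := step α b h ha (by simpa using hc.add_nat 1)
  rw [h1] at this
  exact mul_left_cancel₀ h0 this

theorem T_iter (α b : ℂ) (h : 0 < (α - 2 * b).re) (ha : NotPole α) (hc : NotPole (α - b)) (N : ℕ) :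
    Tsum α b = ∑ k ∈ Finset.range N, (-1) ^ k * (1 / (α - 2 * b + k) - 1 / (α + k)) +
      (-1) ^ N * Tsum (α + N) b := by
  induction N with
  | zero => simp
  | succ N ih =>
    have hre : 0 < (α + N - 2 * b).re := by
      have : (0 : ℝ) ≤ N := by positivity
      simp at h ⊢; linarith
    have := (T_step (α + N) b hre (ha.add_nat N)
      (by have := hc.add_nat N; rwa [show α + N - b = α - b + N by ring])).2
    rw [ih, this, Finset.sum_range_succ]
    push_cast
    rw [show α + N - 2 * b = α - 2 * b + N by ring, ← add_assoc α]
    ring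

theorem prod_bound (b c : ℂ) (hc : ‖b‖ + 2 ≤ c.re) (n : ℕ) :
    ‖poch b (n + 1) / poch c (n + 1)‖ ≤
      ‖b‖ * (‖b‖ + 1) / ((‖b‖ + n + 1) * (‖b‖ + n + 2)) := by
  have hb := norm_nonneg b
  have hf : ∀ n : ℕ, ‖(b + n) / (c + n)‖ ≤ (‖b‖ + n) / (‖b‖ + n + 2) := fun n => by
    have h1 : ‖b + n‖ ≤ ‖b‖ + n := (norm_add_le _ _).trans (by simp)
    have h2 : ‖b‖ + n + 2 ≤ ‖c + n‖ := by
      refine le_trans ?_ (Complex.re_le_norm _)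
      simp; linarith
    rw [norm_div]
    gcongr
  induction n with
  | zero =>
    have := hf 0
    simp only [poch_succ, poch_zero, one_mul, Nat.cast_zero, add_zero, zero_add] at this ⊢
    refine this.trans (le_of_eq ?_)
    field_simp
  | succ n ih =>
    rw [poch_succ b, poch_succ c, mul_div_mul_comm, norm_mul]
    refine (mul_le_mul ih (hf (n + 1)) (norm_nonneg _) (by positivity)).trans (le_of_eq ?_)
    push_cast
    field_simp
    ring

open Filter Topology in
theorem T_tendsto (α b : ℂ) : Tendsto (fun N : ℕ => Tsum (α + N) b) atTop (𝓝 0) := by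
  have hb := norm_nonneg b
  set K := ‖b‖ * (‖b‖ + 1)
  have hK : 0 ≤ K := by positivity
  have hsum := aux_summable_sq K
  set S := ∑' n : ℕ, K * (1 / ((n : ℝ) + 1) ^ 2)
  have hlim : Tendsto (fun N : ℕ => 1 / (α.re + N) * S) atTop (𝓝 0) := by
    have : Tendsto (fun N : ℕ => α.re + (N : ℝ)) atTop atTop :=
      tendsto_atTop_add_const_left _ _ tendsto_natCast_atTop_atTop
    simpa using this.inv_tendsto_atTop.mul_const S
  refine squeeze_zero_norm' ?_ hlim
  obtain ⟨M, hM⟩ := exists_nat_gt (max (-α.re) (‖b‖ + 2 + b.re - α.re))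
  filter_upwards [eventually_ge_atTop M] with N hN
  have hNM : (M : ℝ) ≤ N := by exact_mod_cast hN
  have h1 : 0 < α.re + N := by linarith [le_max_left (-α.re) (‖b‖ + 2 + b.re - α.re)]
  have h2 : ‖b‖ + 2 ≤ (α + N - b).re := by
    simp; linarith [le_max_right (-α.re) (‖b‖ + 2 + b.re - α.re)]
  refine tsum_of_norm_bounded (hsum.hasSum.mul_left (1 / (α.re + N))) fun n => ?_
  have h3 : α.re + N ≤ ‖α + N + n‖ := by
    refine le_trans ?_ (Complex.re_le_norm _)
    simp
  have h4 : poch b (n + 1) / ((α + N + n) * poch (α + N - b) (n + 1)) =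
      1 / (α + N + n) * (poch b (n + 1) / poch (α + N - b) (n + 1)) := by
    rw [div_mul_div_comm, one_mul]
  rw [h4, norm_mul]
  have h5 : ‖1 / (α + N + n)‖ ≤ 1 / (α.re + N) := by
    rw [norm_div, norm_one]
    exact one_div_le_one_div_of_le h1 h3
  refine mul_le_mul h5 ((prod_bound b _ h2 n).trans ?_) (norm_nonneg _) (by positivity)
  rw [div_eq_mul_one_div]
  apply mul_le_mul_of_nonneg_left _ hK
  apply one_div_le_one_div_of_le (by positivity)
  rw [sq]
  gcongr <;> linarith

open Filter Topology in
theorem alt_tendsto (α b : ℂ) (h : 0 < (α - 2 * b).re) (ha : NotPole α) (hc : NotPole (α - b)) :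
    Tendsto (fun N : ℕ => ∑ k ∈ Finset.range N, (-1) ^ k * (1 / (α - 2 * b + k) - 1 / (α + k)))
      atTop (𝓝 (Tsum α b)) := by
  have h1 : Tendsto (fun N : ℕ => (-1) ^ N * Tsum (α + N) b) atTop (𝓝 0) := by
    have := (T_tendsto α b).norm
    rw [norm_zero] at this
    refine squeeze_zero_norm (fun N => ?_) this
    simp
  have h2 := h1.const_sub (Tsum α b)
  rw [sub_zero] at h2
  refine h2.congr fun N => ?_
  rw [sub_eq_iff_eq_add]
  exact T_iter α b h ha hc N

theorem sum_even_odd (e : ℕ → ℂ) (N : ℕ) :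
    ∑ k ∈ Finset.range (2 * N), (-1) ^ k * e k =
      ∑ k ∈ Finset.range (2 * N), e k - 2 * ∑ k ∈ Finset.range N, e (2 * k + 1) := by
  induction N with
  | zero => simp
  | succ N ih =>
    rw [show 2 * (N + 1) = 2 * N + 1 + 1 by ring]
    simp only [Finset.sum_range_succ]
    rw [ih, pow_succ, pow_mul]
    simp
    ring

open Filter Topology in
theorem F32_summation_formula (α β : ℂ) (h : -2 < (α - 2 * β).re) (hβ : β ≠ 1)
    (hl₁ : NotPole (1 + α)) (hl₂ : NotPole (2 + α - β))
    (hp₁ : NotPole α) (hp₂ : NotPole (2 + α - 2 * β))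
    (hp₃ : NotPole ((α + 1) / 2)) (hp₄ : NotPole ((α + 3) / 2 - β)) :
    F32 1 α β (1 + α) (2 + α - β) =
      α * (1 + α - β) / (β - 1) *
        (digamma α - digamma (2 + α - 2 * β) - digamma ((α + 1) / 2) +
          digamma ((α + 3) / 2 - β)) := by
  obtain ⟨b, rfl⟩ : ∃ b, β = b + 1 := ⟨β - 1, by ring⟩
  have hb : b ≠ 0 := fun h0 => hβ (by rw [h0]; ring)
  have hre : 0 < (α - 2 * b).re := by simp at h ⊢; linarith
  have hc : NotPole (α - b + 1) := by rwa [show α - b + 1 = 2 + α - (b + 1) by ring]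
  have hF : F32 1 α (b + 1) (1 + α) (2 + α - (b + 1)) = α / b * Ssum α b := by
    unfold F32 Ssum
    rw [← tsum_mul_left]
    refine tsum_congr fun n => ?_
    rw [poch_one, poch_left b, show 2 + α - (b + 1) = α - b + 1 by ring]
    have hq := poch_ne_zero hc n
    have hf : (n.factorial : ℂ) ≠ 0 := by exact_mod_cast n.factorial_ne_zero
    have h1 := poch_ne_zero hl₁ n
    have h2 := hp₁.ne n
    have h3 : poch α n * (α + n) = α * poch (1 + α) n := by
      rw [← poch_succ, poch_left, add_comm 1 α]
    field_simp
    linear_combination (poch (b + 1) n) * h3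
  rw [hF]
  by_cases h0 : α - b = 0
  · rw [step α b hre hp₁ hc, h0, show 1 + α - (b + 1) = α - b by ring, h0]
    simp
  have hc' : NotPole (α - b) := by
    intro n hn
    cases n with
    | zero => exact h0 (by simpa using hn)
    | succ n => exact hc n (by rw [hn]; push_cast; ring)
  have hl := alt_tendsto α b hre hp₁ hc'
  have hl2 := hl.comp (tendsto_id.const_mul_atTop' (by norm_num : 0 < 2))
  have d1 := (digamma_diff α (2 + α - 2 * (b + 1)) hp₁ hp₂).comp
    (tendsto_id.const_mul_atTop' (by norm_num : 0 < 2))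
  have d2 := digamma_diff ((α + 3) / 2 - (b + 1)) ((α + 1) / 2) hp₄ hp₃
  have d3 := d1.add d2
  have hT := tendsto_nhds_unique (hl2.congr fun N => ?_) d3
  · rw [(T_step α b hre hp₁ hc').1, hT]
    field_simp
    ring
  · simp only [Function.comp, id]
    rw [sum_even_odd, sub_eq_add_neg, ← neg_mul, Finset.mul_sum]
    congr 1
    · refine Finset.sum_congr rfl fun k _ => ?_
      rw [show 2 + α - 2 * (b + 1) = α - 2 * b by ring]
    · refine Finset.sum_congr rfl fun k _ => ?_
      have e1 : α - 2 * b + ((2 * k + 1 : ℕ) : ℂ) = 2 * ((α + 3) / 2 - (b + 1) + k) := by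
        push_cast; ring
      have e2 : α + ((2 * k + 1 : ℕ) : ℂ) = 2 * ((α + 1) / 2 + k) := by
        push_cast; ring
      rw [e1, e2]
      have := hp₃.ne k
      have := hp₄.ne k
      field_simp
      ring
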